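/- There is an absolute constant C > 0 with the following property. Let g : (0, π) → ℝ be locally absolutely continuous with a.e. derivative g′. Then ∫_0^π |g(θ)|² (sin θ)⁻¹ dθ ≤ C ( ∫_0^π |g′(θ) + (cos θ / sin θ) g(θ)|² sin θ dθ + ∫_0^π |g(θ)|² sin θ dθ ), where all integrals are allowed to be +∞. -/

import Mathlib

open MeasureTheory

/-- `g` is locally absolutely continuous on the set `s` with a.e. derivative `g'`:
`g'` is integrable on compact subintervals of `s` and the fundamental theorem of
calculus representation holds between any two points of `s`. -/
def LocAC (s : Set ℝ) (f f' : ℝ → ℝ) : Prop :=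
  (∀ a ∈ s, ∀ b ∈ s, IntervalIntegrable f' volume a b) ∧
  (∀ a ∈ s, ∀ b ∈ s, f b - f a = ∫ t in a..b, f' t)

open Set Filter Topology
open scoped ENNReal NNReal

/-!
With `u = g sin` the inequality reads `∫ u² / sin³ ≤ ∫ u'² / sin` (so `C = 1`) whenever
`∫ u² / sin` is finite. If `w' + p w² + q = 0`, completing the square gives
`u'² / p - q u² = (w u²)' + (u' - p w u)² / p`, hence `∫ q u² ≤ ∫ u'² / p` up to boundary terms.
For `p = sin` the solution `w = cos / sin²` has the desired potential `q = 1 / sin³`, but it is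
singular at the endpoints. The bounded functions `w = cos / (sin² + δ)` have
`q = (1 + δ) sin / (sin² + δ)²`, and since `1 / sin` is not integrable at `0` and `π`, finiteness
of `∫ u² / sin` makes their boundary terms vanish along suitable sequences. Finally
`δ → 0` by Fatou.
-/

namespace LocAC

variable {s t : Set ℝ} {f f' g g' : ℝ → ℝ} {a b : ℝ}

theorem mono (hf : LocAC s f f') (hts : t ⊆ s) : LocAC t f f' :=
  ⟨fun x hx y hy => hf.1 x (hts hx) y (hts hy), fun x hx y hy => hf.2 x (hts hx) y (hts hy)⟩

theorem of_hasDerivAt (hs : s.OrdConnected) (hf : ∀ x ∈ s, HasDerivAt f (f' x) x)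
    (hf' : ContinuousOn f' s) : LocAC s f f' := by
  have hint : ∀ x ∈ s, ∀ y ∈ s, IntervalIntegrable f' volume x y := fun x hx y hy =>
    (hf'.mono (hs.uIcc_subset hx hy)).intervalIntegrable
  exact ⟨hint, fun x hx y hy => (intervalIntegral.integral_eq_sub_of_hasDerivAt
    (fun z hz => hf z (hs.uIcc_subset hx hy hz)) (hint x hx y hy)).symm⟩

theorem exists_absolutelyContinuousOnInterval (hf : LocAC s f f') (hab : uIcc a b ⊆ s) :
    ∃ F : ℝ → ℝ, AbsolutelyContinuousOnInterval F a b ∧ EqOn F f (uIcc a b) ∧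
      ∀ᵐ x, x ∈ uIcc a b → deriv F x = f' x := by
  have hint : IntervalIntegrable f' volume a b :=
    hf.1 a (hab left_mem_uIcc) b (hab right_mem_uIcc)
  refine ⟨fun x => f a + ∫ t in a..x, f' t, ?_, fun x hx => ?_, ?_⟩
  · have hconst : AbsolutelyContinuousOnInterval (fun _ : ℝ => f a) a b :=
      contDiffOn_const.absolutelyContinuousOnInterval
    exact hconst.add (hint.absolutelyContinuousOnInterval_intervalIntegral left_mem_uIcc)
  · exact add_eq_of_eq_sub' (hf.2 a (hab left_mem_uIcc) x (hab hx)).symm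
  · filter_upwards [hint.ae_hasDerivAt_integral] with x hx hxab
    exact ((hx hxab a left_mem_uIcc).const_add (f a)).deriv

theorem continuousOn_uIcc (hf : LocAC s f f') (hab : uIcc a b ⊆ s) :
    ContinuousOn f (uIcc a b) := by
  obtain ⟨F, hF, hFf, -⟩ := hf.exists_absolutelyContinuousOnInterval hab
  exact hF.continuousOn.congr hFf.symm

theorem continuousOn (hf : LocAC s f f') (hs : IsOpen s) : ContinuousOn f s := by
  intro x hx
  obtain ⟨ε, hε, hball⟩ := Metric.nhds_basis_closedBall.mem_iff.1 (hs.mem_nhds hx)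
  rw [Real.closedBall_eq_Icc, ← uIcc_of_le (by linarith)] at hball
  refine ((hf.continuousOn_uIcc hball).continuousAt ?_).continuousWithinAt
  rw [uIcc_of_le (by linarith)]
  exact Icc_mem_nhds (by linarith) (by linarith)

theorem mul (hs : s.OrdConnected) (hf : LocAC s f f') (hg : LocAC s g g') :
    LocAC s (fun x => f x * g x) (fun x => f' x * g x + f x * g' x) := by
  refine ⟨fun a ha b hb => ?_, fun a ha b hb => ?_⟩ <;>
    have hab : uIcc a b ⊆ s := hs.uIcc_subset ha hb
  · exact ((hf.1 a ha b hb).mul_continuousOn (hg.continuousOn_uIcc hab)).add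
      ((hg.1 a ha b hb).continuousOn_mul (hf.continuousOn_uIcc hab))
  · obtain ⟨F, hF, hFf, hF'⟩ := hf.exists_absolutelyContinuousOnInterval hab
    obtain ⟨G, hG, hGg, hG'⟩ := hg.exists_absolutelyContinuousOnInterval hab
    simp only [← hFf left_mem_uIcc, ← hFf right_mem_uIcc, ← hGg left_mem_uIcc, ← hGg right_mem_uIcc,
      ← hF.integral_deriv_mul_eq_sub hG]
    refine intervalIntegral.integral_congr_ae ?_
    filter_upwards [hF', hG'] with x hFx hGx hx
    have hxab : x ∈ uIcc a b := uIoc_subset_uIcc hx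
    rw [hFx hxab, hGx hxab, hFf hxab, hGg hxab]

end LocAC

theorem setLIntegral_Ioo_le_of_forall_Ioc_le {μ : Measure ℝ} {l r : ℝ} {f : ℝ → ℝ≥0∞} {K : ℝ≥0∞}
    (hK : ∀ a ∈ Ioo l r, ∀ b ∈ Ioo l r, a ≤ b → ∫⁻ x in Ioc a b, f x ∂μ ≤ K) :
    ∫⁻ x in Ioo l r, f x ∂μ ≤ K := by
  rcases le_or_gt r l with hrl | hlr
  · simp [Ioo_eq_empty_of_le hrl]
  obtain ⟨a, b, ha_anti, hb_mono, ha_mem, hb_mem, hab, ha_lim, hb_lim⟩ :=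
    exists_seq_strictAnti_strictMono_tendsto hlr
  have hcover : Ioo l r ⊆ ⋃ n, Ioc (a n) (b n) := fun x hx =>
    let ⟨n, han, hbn⟩ := ((ha_lim.eventually_lt_const hx.1).and
      (hb_lim.eventually_const_lt hx.2)).exists
    mem_iUnion.2 ⟨n, han, hbn.le⟩
  have hmono : Monotone fun n => Ioc (a n) (b n) := fun m n hmn =>
    Ioc_subset_Ioc (ha_anti.antitone hmn) (hb_mono.monotone hmn)
  calc ∫⁻ x in Ioo l r, f x ∂μ
      ≤ ∫⁻ x in ⋃ n, Ioc (a n) (b n), f x ∂μ := lintegral_mono_set hcover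
    _ = ⨆ n, ∫⁻ x in Ioc (a n) (b n), f x ∂μ :=
        setLIntegral_iUnion_of_directed f hmono.directed_le
    _ ≤ K := iSup_le fun n => hK (a n) (ha_mem n) (b n) (hb_mem n) (hab n n).le

section Riccati

variable {u u' w p q : ℝ → ℝ} {a b : ℝ}

theorem LocAC.intervalIntegrable_riccati_mul_sq (hab : a ≤ b) (hu : LocAC (Icc a b) u u')
    (hw : LocAC (Icc a b) w fun x => -(q x + p x * w x ^ 2)) (hp : ContinuousOn p (Icc a b)) :
    IntervalIntegrable (fun x => q x * u x ^ 2) volume a b := by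
  rw [← uIcc_of_le hab] at hu hw hp
  have hu_cont : ContinuousOn u (uIcc a b) := hu.continuousOn_uIcc Subset.rfl
  have hw_cont : ContinuousOn w (uIcc a b) := hw.continuousOn_uIcc Subset.rfl
  have hpw : IntervalIntegrable (fun x => p x * w x ^ 2) volume a b :=
    (hp.mul (hw_cont.pow 2)).intervalIntegrable
  have hq : IntervalIntegrable q volume a b := by
    simpa using (hw.1 a left_mem_uIcc b right_mem_uIcc).neg.sub hpw
  exact hq.mul_continuousOn (hu_cont.pow 2)

theorem LocAC.integral_mul_sq_le_of_riccati (hab : a ≤ b) (hu : LocAC (Icc a b) u u')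
    (hw : LocAC (Icc a b) w fun x => -(q x + p x * w x ^ 2)) (hp : ContinuousOn p (Icc a b))
    (hp_pos : ∀ x ∈ Icc a b, 0 < p x)
    (hint : IntervalIntegrable (fun x => u' x ^ 2 / p x) volume a b) :
    ∫ x in a..b, q x * u x ^ 2 ≤
      (∫ x in a..b, u' x ^ 2 / p x) + (w a * u a ^ 2 - w b * u b ^ 2) := by
  have hwu := hw.mul ordConnected_Icc (hu.mul ordConnected_Icc hu)
  have hwu_int := hwu.1 a (left_mem_Icc.2 hab) b (right_mem_Icc.2 hab)
  have hwu_sub := hwu.2 a (left_mem_Icc.2 hab) b (right_mem_Icc.2 hab)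
  have hmono := intervalIntegral.integral_mono_on hab
    (hu.intervalIntegrable_riccati_mul_sq hab hw hp) (hint.sub hwu_int) fun x hx => by
      have hpx : 0 < p x := hp_pos x hx
      have hsquare : 0 ≤ (u' x - p x * w x * u x) ^ 2 / p x := by positivity
      rw [← sub_nonneg]
      convert hsquare using 1
      field_simp
      ring
  rw [intervalIntegral.integral_sub hint hwu_int, ← hwu_sub] at hmono
  linarith

theorem LocAC.setLIntegral_Ioc_mul_sq_le_of_riccati (hab : a ≤ b) (hu : LocAC (Icc a b) u u')
    (hw : LocAC (Icc a b) w fun x => -(q x + p x * w x ^ 2)) (hp : ContinuousOn p (Icc a b))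
    (hp_pos : ∀ x ∈ Icc a b, 0 < p x) (hq : ∀ x ∈ Icc a b, 0 ≤ q x) :
    ∫⁻ x in Ioc a b, ENNReal.ofReal (q x * u x ^ 2) ≤
      (∫⁻ x in Ioc a b, ENNReal.ofReal (u' x ^ 2 / p x)) +
        ENNReal.ofReal (w a * u a ^ 2 - w b * u b ^ 2) := by
  have hq_nonneg : 0 ≤ᵐ[volume.restrict (Ioc a b)] fun x => q x * u x ^ 2 :=
    ae_restrict_of_forall_mem measurableSet_Ioc fun x hx =>
      mul_nonneg (hq x (Ioc_subset_Icc_self hx)) (sq_nonneg _)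
  have hp_nonneg : 0 ≤ᵐ[volume.restrict (Ioc a b)] fun x => u' x ^ 2 / p x :=
    ae_restrict_of_forall_mem measurableSet_Ioc fun x hx =>
      div_nonneg (sq_nonneg _) (hp_pos x (Ioc_subset_Icc_self hx)).le
  have hu'_meas : AEStronglyMeasurable u' (volume.restrict (Ioc a b)) :=
    (hu.1 a (left_mem_Icc.2 hab) b (right_mem_Icc.2 hab)).aestronglyMeasurable
  have hp_meas : AEStronglyMeasurable p (volume.restrict (Ioc a b)) :=
    (hp.mono Ioc_subset_Icc_self).aestronglyMeasurable measurableSet_Ioc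
  by_cases htop : ∫⁻ x in Ioc a b, ENNReal.ofReal (u' x ^ 2 / p x) = ∞
  · simp [htop]
  have hint : IntegrableOn (fun x => u' x ^ 2 / p x) (Ioc a b) :=
    (lintegral_ofReal_ne_top_iff_integrable ((hu'_meas.pow 2).div₀ hp_meas) hp_nonneg).1 htop
  have hqu_int : IntegrableOn (fun x => q x * u x ^ 2) (Ioc a b) :=
    (intervalIntegrable_iff_integrableOn_Ioc_of_le hab).1
      (hu.intervalIntegrable_riccati_mul_sq hab hw hp)
  have hle := hu.integral_mul_sq_le_of_riccati hab hw hp hp_pos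
    ((intervalIntegrable_iff_integrableOn_Ioc_of_le hab).2 hint)
  rw [intervalIntegral.integral_of_le hab, intervalIntegral.integral_of_le hab] at hle
  rw [← ofReal_integral_eq_lintegral_ofReal hqu_int hq_nonneg,
    ← ofReal_integral_eq_lintegral_ofReal hint hp_nonneg]
  exact (ENNReal.ofReal_le_ofReal hle).trans ENNReal.ofReal_add_le

theorem LocAC.setLIntegral_Ioo_mul_sq_le_of_riccati {l r M : ℝ} (hu : LocAC (Ioo l r) u u')
    (hw : LocAC (Ioo l r) w fun x => -(q x + p x * w x ^ 2)) (hp : ContinuousOn p (Ioo l r))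
    (hp_pos : ∀ x ∈ Ioo l r, 0 < p x) (hq : ∀ x ∈ Ioo l r, 0 ≤ q x)
    (hw_le : ∀ x ∈ Ioo l r, |w x| ≤ M)
    (hl : ∀ ε > 0, ∃ᶠ x in 𝓝[>] l, u x ^ 2 < ε) (hr : ∀ ε > 0, ∃ᶠ x in 𝓝[<] r, u x ^ 2 < ε) :
    ∫⁻ x in Ioo l r, ENNReal.ofReal (q x * u x ^ 2) ≤
      ∫⁻ x in Ioo l r, ENNReal.ofReal (u' x ^ 2 / p x) := by
  refine setLIntegral_Ioo_le_of_forall_Ioc_le fun a ha b hb hab => ?_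
  refine ENNReal.le_of_forall_pos_le_add fun ε hε _ => ?_
  obtain ⟨η, hη, hMη⟩ := exists_pos_mul_lt (NNReal.coe_pos.2 hε) (2 * M)
  obtain ⟨a', hua', hla', ha'a⟩ := ((hl η hη).and_eventually (Ioo_mem_nhdsGT ha.1)).exists
  obtain ⟨b', hub', hbb', hb'r⟩ := ((hr η hη).and_eventually (Ioo_mem_nhdsLT hb.2)).exists
  have hsub : Icc a' b' ⊆ Ioo l r := Icc_subset_Ioo hla' hb'r
  have hab' : a' ≤ b' := (ha'a.le.trans hab).trans hbb'.le
  have hw_mul : ∀ x ∈ Icc a' b', u x ^ 2 < η → |w x * u x ^ 2| ≤ M * η := fun x hx hux => by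
    rw [abs_mul, abs_of_nonneg (sq_nonneg (u x))]
    have hwx : |w x| ≤ M := hw_le x (hsub hx)
    have hM : 0 ≤ M := (abs_nonneg _).trans hwx
    gcongr
  have hboundary : w a' * u a' ^ 2 - w b' * u b' ^ 2 ≤ ε := by
    have hwa := abs_le.1 (hw_mul a' (left_mem_Icc.2 hab') hua')
    have hwb := abs_le.1 (hw_mul b' (right_mem_Icc.2 hab') hub')
    linarith
  calc ∫⁻ x in Ioc a b, ENNReal.ofReal (q x * u x ^ 2)
      ≤ ∫⁻ x in Ioc a' b', ENNReal.ofReal (q x * u x ^ 2) :=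
        lintegral_mono_set (Ioc_subset_Ioc ha'a.le hbb'.le)
    _ ≤ (∫⁻ x in Ioc a' b', ENNReal.ofReal (u' x ^ 2 / p x)) +
          ENNReal.ofReal (w a' * u a' ^ 2 - w b' * u b' ^ 2) :=
        (hu.mono hsub).setLIntegral_Ioc_mul_sq_le_of_riccati hab' (hw.mono hsub) (hp.mono hsub)
          (fun x hx => hp_pos x (hsub hx)) fun x hx => hq x (hsub hx)
    _ ≤ (∫⁻ x in Ioo l r, ENNReal.ofReal (u' x ^ 2 / p x)) + ε := by
        gcongr
        · exact Ioc_subset_Icc_self.trans hsub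
        · exact ENNReal.ofReal_le_of_le_toReal hboundary

end Riccati

section Endpoint

variable {f s : ℝ → ℝ} {K : ℝ≥0} {l r c ε : ℝ}

theorem exists_mem_Ioo_lt_of_integrableOn_div (hs : LipschitzWith K s) (hsc : s c = 0)
    (hlr : l < r) (hc : c ∈ Icc l r) (hs_pos : ∀ x ∈ Ioo l r, 0 < s x)
    (hint : IntegrableOn (fun x => f x / s x) (Ioo l r)) (hε : 0 < ε) :
    ∃ x ∈ Ioo l r, f x < ε := by
  by_contra! hfε
  have hinv : IntervalIntegrable (fun x => (x - c)⁻¹) volume l r := by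
    rw [intervalIntegrable_iff_integrableOn_Ioo_of_le hlr.le]
    refine (hint.const_mul (K * ε⁻¹)).mono' (by fun_prop)
      (ae_restrict_of_forall_mem measurableSet_Ioo fun x hx => ?_)
    have hsx : 0 < s x := hs_pos x hx
    have hs_le : s x ≤ K * |x - c| := by
      simpa [hsc, Real.dist_eq, abs_of_pos hsx] using hs.dist_le_mul x c
    have hxc : 0 < |x - c| := pos_of_mul_pos_right (hsx.trans_le hs_le) K.2
    calc ‖(x - c)⁻¹‖ = |x - c|⁻¹ := by rw [norm_inv, Real.norm_eq_abs]
      _ ≤ K / s x := by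
        rw [inv_eq_one_div, div_le_div_iff₀ hxc hsx]
        linarith
      _ = K * ε⁻¹ * (ε / s x) := by field_simp
      _ ≤ K * ε⁻¹ * (f x / s x) := by gcongr; exact hfε x hx
  rw [intervalIntegrable_sub_inv_iff, uIcc_of_le hlr.le] at hinv
  exact hinv.elim hlr.ne (absurd hc)

theorem frequently_nhdsGT_lt_of_integrableOn_div (hs : LipschitzWith K s) (hsl : s l = 0)
    (hlr : l < r) (hs_pos : ∀ x ∈ Ioo l r, 0 < s x)
    (hint : IntegrableOn (fun x => f x / s x) (Ioo l r)) (hε : 0 < ε) :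
    ∃ᶠ x in 𝓝[>] l, f x < ε := by
  refine (nhdsGT_basis l).frequently_iff.2 fun b hlb => ?_
  have hsub : Ioo l (min b r) ⊆ Ioo l r := Ioo_subset_Ioo_right (min_le_right b r)
  obtain ⟨x, hx, hfx⟩ := exists_mem_Ioo_lt_of_integrableOn_div hs hsl (lt_min hlb hlr)
    (left_mem_Icc.2 (lt_min hlb hlr).le) (fun x hx => hs_pos x (hsub hx)) (hint.mono_set hsub) hε
  exact ⟨x, Ioo_subset_Ioo_right (min_le_left b r) hx, hfx⟩

theorem frequently_nhdsLT_lt_of_integrableOn_div (hs : LipschitzWith K s) (hsr : s r = 0)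
    (hlr : l < r) (hs_pos : ∀ x ∈ Ioo l r, 0 < s x)
    (hint : IntegrableOn (fun x => f x / s x) (Ioo l r)) (hε : 0 < ε) :
    ∃ᶠ x in 𝓝[<] r, f x < ε := by
  refine (nhdsLT_basis r).frequently_iff.2 fun a har => ?_
  have hsub : Ioo (max a l) r ⊆ Ioo l r := Ioo_subset_Ioo_left (le_max_right a l)
  obtain ⟨x, hx, hfx⟩ := exists_mem_Ioo_lt_of_integrableOn_div hs hsr (max_lt har hlr)
    (right_mem_Icc.2 (max_lt har hlr).le) (fun x hx => hs_pos x (hsub hx)) (hint.mono_set hsub) hε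
  exact ⟨x, Ioo_subset_Ioo_left (le_max_left a l) hx, hfx⟩

end Endpoint

section Sine

open Real

variable {u u' : ℝ → ℝ} {δ : ℝ}

/-- The regularization `cos θ / (sin² θ + δ)` of `cos θ / sin² θ`, bounded for `0 < δ`, which solves
the Riccati equation `w' + sin w² + q = 0` with `q = hardyPotential δ`. -/
noncomputable def hardyMultiplier (δ θ : ℝ) : ℝ :=
  cos θ / (sin θ ^ 2 + δ)

/-- The potential of the Riccati equation solved by `hardyMultiplier δ`; it regularizes the Hardy
weight `1 / sin³ θ`, which is its value at `δ = 0`. -/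
noncomputable def hardyPotential (δ θ : ℝ) : ℝ :=
  (1 + δ) * sin θ / (sin θ ^ 2 + δ) ^ 2

theorem hardyPotential_zero {θ : ℝ} (hθ : sin θ ≠ 0) : hardyPotential 0 θ = 1 / sin θ ^ 3 := by
  simp only [hardyPotential, add_zero]
  field

theorem hardyPotential_nonneg {θ : ℝ} (hδ : 0 < δ) (hθ : 0 ≤ sin θ) : 0 ≤ hardyPotential δ θ := by
  unfold hardyPotential
  positivity

@[fun_prop]
theorem measurable_hardyPotential : Measurable (hardyPotential δ) := by
  unfold hardyPotential
  fun_prop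

theorem tendsto_hardyPotential {θ : ℝ} (hθ : sin θ ≠ 0) :
    Tendsto (hardyPotential · θ) (𝓝[>] 0) (𝓝 (1 / sin θ ^ 3)) := by
  have hcont : ContinuousAt (hardyPotential · θ) 0 := by
    unfold hardyPotential
    fun_prop (disch := simp [hθ])
  simpa only [hardyPotential_zero hθ] using hcont.tendsto.mono_left nhdsWithin_le_nhds

theorem abs_hardyMultiplier_le (hδ : 0 < δ) (θ : ℝ) : |hardyMultiplier δ θ| ≤ 1 / δ := by
  rw [hardyMultiplier, abs_div, abs_of_pos (by positivity : 0 < sin θ ^ 2 + δ)]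
  gcongr
  · exact abs_cos_le_one θ
  · exact le_add_of_nonneg_left (sq_nonneg _)

theorem hasDerivAt_hardyMultiplier (hδ : 0 < δ) (θ : ℝ) :
    HasDerivAt (hardyMultiplier δ)
      (-(hardyPotential δ θ + sin θ * hardyMultiplier δ θ ^ 2)) θ := by
  have hden : sin θ ^ 2 + δ ≠ 0 := by positivity
  refine ((hasDerivAt_cos θ).fun_div (((hasDerivAt_sin θ).fun_pow 2).add_const δ)
    hden).congr_deriv ?_
  simp only [hardyMultiplier, hardyPotential, Nat.cast_ofNat, Nat.add_one_sub_one, pow_one]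
  field_simp
  linear_combination (-sin θ) * sin_sq_add_cos_sq θ

theorem locAC_hardyMultiplier {s : Set ℝ} (hs : s.OrdConnected) (hδ : 0 < δ) :
    LocAC s (hardyMultiplier δ)
      fun θ => -(hardyPotential δ θ + sin θ * hardyMultiplier δ θ ^ 2) := by
  refine .of_hasDerivAt hs (fun θ _ => hasDerivAt_hardyMultiplier hδ θ) ?_
  have hden : ∀ θ, sin θ ^ 2 + δ ≠ 0 := fun θ => by positivity
  unfold hardyPotential hardyMultiplier
  fun_prop (disch := simp [hden])

theorem LocAC.lintegral_hardyPotential_mul_sq_le (hu : LocAC (Ioo 0 π) u u')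
    (hint : IntegrableOn (fun θ => u θ ^ 2 / sin θ) (Ioo 0 π)) (hδ : 0 < δ) :
    ∫⁻ θ in Ioo 0 π, ENNReal.ofReal (hardyPotential δ θ * u θ ^ 2) ≤
      ∫⁻ θ in Ioo 0 π, ENNReal.ofReal (u' θ ^ 2 / sin θ) := by
  have hsin_pos : ∀ θ ∈ Ioo 0 π, 0 < sin θ := fun θ hθ => sin_pos_of_mem_Ioo hθ
  exact hu.setLIntegral_Ioo_mul_sq_le_of_riccati (locAC_hardyMultiplier ordConnected_Ioo hδ)
    continuous_sin.continuousOn hsin_pos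
    (fun θ hθ => hardyPotential_nonneg hδ (hsin_pos θ hθ).le)
    (fun θ _ => abs_hardyMultiplier_le hδ θ)
    (fun _ => frequently_nhdsGT_lt_of_integrableOn_div lipschitzWith_sin sin_zero pi_pos
      hsin_pos hint)
    (fun _ => frequently_nhdsLT_lt_of_integrableOn_div lipschitzWith_sin sin_pi pi_pos
      hsin_pos hint)

theorem liminf_ofReal_hardyPotential_mul {θ : ℝ} (hθ : sin θ ≠ 0) (x : ℝ) :
    liminf (fun δ => ENNReal.ofReal (hardyPotential δ θ * x)) (𝓝[>] 0) =
      ENNReal.ofReal (x / sin θ ^ 3) := by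
  rw [← one_div_mul_eq_div]
  exact (ENNReal.tendsto_ofReal ((tendsto_hardyPotential hθ).mul_const x)).liminf_eq

theorem LocAC.lintegral_sq_div_sin_pow_three_le (hu : LocAC (Ioo 0 π) u u')
    (hfin : ∫⁻ θ in Ioo 0 π, ENNReal.ofReal (u θ ^ 2 / sin θ) ≠ ∞) :
    ∫⁻ θ in Ioo 0 π, ENNReal.ofReal (u θ ^ 2 / sin θ ^ 3) ≤
      ∫⁻ θ in Ioo 0 π, ENNReal.ofReal (u' θ ^ 2 / sin θ) := by
  have hu_meas : AEMeasurable u (volume.restrict (Ioo 0 π)) :=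
    (hu.continuousOn isOpen_Ioo).aemeasurable measurableSet_Ioo
  have hint : IntegrableOn (fun θ => u θ ^ 2 / sin θ) (Ioo 0 π) :=
    (lintegral_ofReal_ne_top_iff_integrable
      (by fun_prop : AEMeasurable _ _).aestronglyMeasurable
      (ae_restrict_of_forall_mem measurableSet_Ioo fun θ hθ =>
        div_nonneg (sq_nonneg _) (sin_pos_of_mem_Ioo hθ).le)).1 hfin
  calc ∫⁻ θ in Ioo 0 π, ENNReal.ofReal (u θ ^ 2 / sin θ ^ 3)
      = ∫⁻ θ in Ioo 0 π, liminf (fun δ =>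
          ENNReal.ofReal (hardyPotential δ θ * u θ ^ 2)) (𝓝[>] 0) :=
        setLIntegral_congr_fun measurableSet_Ioo fun θ hθ =>
          (liminf_ofReal_hardyPotential_mul (sin_pos_of_mem_Ioo hθ).ne' _).symm
    _ ≤ liminf (fun δ => ∫⁻ θ in Ioo 0 π,
          ENNReal.ofReal (hardyPotential δ θ * u θ ^ 2)) (𝓝[>] 0) :=
        lintegral_liminf_le' fun δ => by fun_prop
    _ ≤ ∫⁻ θ in Ioo 0 π, ENNReal.ofReal (u' θ ^ 2 / sin θ) :=
        liminf_le_of_frequently_le' (Eventually.frequently (by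
          filter_upwards [self_mem_nhdsWithin] with δ hδ
          exact hu.lintegral_hardyPotential_mul_sq_le hint hδ))

end Sine

/-- Hardy-type inequality of Lemma A.2 (iv):
`∫ g² (sin θ)⁻¹ ≤ C ( ∫ (g' + (cos θ/sin θ) g)² sin θ + ∫ g² sin θ )`. -/
theorem hardy_inverse_sin :
    ∃ C : ℝ, 0 < C ∧
      ∀ g g' : ℝ → ℝ, LocAC (Set.Ioo 0 Real.pi) g g' →
        (∫⁻ θ in Set.Ioo 0 Real.pi, ENNReal.ofReal ((g θ) ^ 2 * (Real.sin θ)⁻¹)) ≤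
          ENNReal.ofReal C *
            ((∫⁻ θ in Set.Ioo 0 Real.pi,
                ENNReal.ofReal ((g' θ + Real.cos θ / Real.sin θ * g θ) ^ 2 * Real.sin θ)) +
             (∫⁻ θ in Set.Ioo 0 Real.pi, ENNReal.ofReal ((g θ) ^ 2 * Real.sin θ))) := by
  refine ⟨1, one_pos, fun g g' hg => ?_⟩
  rw [ENNReal.ofReal_one, one_mul]
  by_cases hfin : ∫⁻ θ in Ioo 0 Real.pi, ENNReal.ofReal (g θ ^ 2 * Real.sin θ) = ∞
  · simp [hfin]
  have hu : LocAC (Ioo 0 Real.pi) (fun θ => g θ * Real.sin θ)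
      (fun θ => g' θ * Real.sin θ + g θ * Real.cos θ) :=
    hg.mul ordConnected_Ioo (.of_hasDerivAt ordConnected_Ioo
      (fun θ _ => Real.hasDerivAt_sin θ) Real.continuous_cos.continuousOn)
  have hsin : ∀ θ ∈ Ioo 0 Real.pi, Real.sin θ ≠ 0 := fun θ hθ => (Real.sin_pos_of_mem_Ioo hθ).ne'
  have hu_hardy := hu.lintegral_sq_div_sin_pow_three_le (by
    convert hfin using 1
    refine setLIntegral_congr_fun measurableSet_Ioo fun θ hθ => congrArg _ ?_
    field [hsin θ hθ])
  refine le_add_right (Eq.trans_le ?_ (hu_hardy.trans_eq ?_)) <;>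
    refine setLIntegral_congr_fun measurableSet_Ioo fun θ hθ => congrArg _ ?_ <;>
    field [hsin θ hθ]
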